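/- Let ν ∈ (0,1] and k ∈ ℤ. Let ω : [0,∞)×[−1,1] → ℂ be continuous, continuously differentiable in t, twice continuously differentiable in y, and satisfy ∂_tω(t,y) = ν(∂_y²ω(t,y) − k²ω(t,y)) − iky·ω(t,y) for t > 0, with ω(t,−1) = ω(t,1) = 0 for all t ≥ 0. Then there exist constants C > 0 and c > 0, independent of ν, k, t and ω, such that ‖ω(t,·)‖_{L²} ≤ C·e^{−c·ν^{1/3}|k|^{2/3}·t − ν·t}·‖ω(0,·)‖_{L²} for all t ≥ 0; moreover, if |k| ≥ 1 then (νk²)^{1/3}·∫_0^∞ ‖ω(t,·)‖_{L²}² dt ≤ C·‖ω(0,·)‖_{L²}². -/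

import Mathlib

/-- The `L²` norm of a function on the interval `[-1,1]`. -/
noncomputable def nL2 (f : ℝ → ℂ) : ℝ :=
  (∫ y in Set.Icc (-1:ℝ) 1, ‖f y‖ ^ 2) ^ ((1:ℝ)/2)

/-!
Only the pointwise continuity of `∂ₜω` is known, so the energies of the solution cannot be
differentiated under the integral sign directly. For every `t > 0` the equation bounds `∂ₜω` on the
whole channel, so by Baire's theorem it is bounded uniformly near some arbitrarily small time; the
maximum principle, applied to differences of time shifts of `ω`, carries this bound over to all
later times.

Write `E = ‖ω‖²`. The dissipation of `E`, the commutator of `∂_y` with the shear `y`, and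
multipliers which are powers of the time lag `τ` combine into the hypocoercive functional
`E + ντ ‖∂_yω‖² + νκτ² Re⟨∂_yω, iω⟩ + νκ²τ³/3 ‖ω‖²`. It equals `E` at `τ = 0`, it is nonincreasing
along the flow, and it dominates `(1 + νκ²τ³/12) E`. Hence `E(s + τ) ≤ (1 + νκ²τ³/12)⁻¹ E(s)`, and
iterating this on the time scale `τ = 3 (νκ²)^(-1/3)` gives decay at the enhanced rate, from which
the time integral is bounded. The factor `e^{-νt}` comes from the Poincaré inequality: as its
constant on `[-1, 1]` exceeds `2`, the geometric mean of the two decay estimates suffices.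
-/

open MeasureTheory Filter Set
open scoped Topology RealInnerProductSpace

section Calculus

lemma exists_isOpen_forall_norm_le_of_pointwise {ι X E : Type*} [TopologicalSpace X] [BaireSpace X]
    [SeminormedAddCommGroup E] {g : ι → X → E} (hg : ∀ i, Continuous (g i)) {U : Set X}
    (hU : IsOpen U) (hne : U.Nonempty) (hb : ∀ x ∈ U, ∃ C : ℝ, ∀ i, ‖g i x‖ ≤ C) :
    ∃ V ⊆ U, IsOpen V ∧ V.Nonempty ∧ ∃ C : ℝ, ∀ x ∈ V, ∀ i, ‖g i x‖ ≤ C := by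
  let B (n : ℕ) : Set X := ⋂ i, {x | ‖g i x‖ ≤ n}
  have hclosed (n : ℕ) : IsClosed (B n ∪ Uᶜ) :=
    (isClosed_iInter fun i => isClosed_le (hg i).norm continuous_const).union hU.isClosed_compl
  have hcover : ⋃ n, (B n ∪ Uᶜ) = univ := by
    refine eq_univ_of_forall fun x => mem_iUnion.2 ?_
    by_cases hx : x ∈ U
    · obtain ⟨C, hC⟩ := hb x hx
      obtain ⟨n, hn⟩ := exists_nat_ge C
      exact ⟨n, Or.inl (mem_iInter.2 fun i => (hC i).trans hn)⟩
    · exact ⟨0, Or.inr hx⟩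
  obtain ⟨x, hx, hxU⟩ :=
    (dense_iUnion_interior_of_closed hclosed hcover).exists_mem_open hU hne
  obtain ⟨n, hn⟩ := mem_iUnion.1 hx
  refine ⟨interior (B n ∪ Uᶜ) ∩ U, inter_subset_right, isOpen_interior.inter hU, ⟨x, hn, hxU⟩, n,
    fun z hz i => mem_iInter.1 ((interior_subset hz.1).resolve_right (not_not.2 hz.2)) i⟩

lemma contDiff_one_deriv_of_contDiff_two {E : Type*} [NormedAddCommGroup E] [NormedSpace ℝ E]
    {f : ℝ → E} (hf : ContDiff ℝ 2 f) : ContDiff ℝ 1 (deriv f) :=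
  ContDiff.iterate_deriv' 1 1 hf

lemma deriv_deriv_nonpos_of_isLocalMax {φ : ℝ → ℝ} {x : ℝ} (hφ : ContinuousAt φ x)
    (hmax : IsLocalMax φ x) : deriv (deriv φ) x ≤ 0 := by
  by_contra! hpos
  have hmin : IsLocalMin φ x := isLocalMin_of_deriv_deriv_pos hpos hmax.deriv_eq_zero hφ
  have hconst : φ =ᶠ[𝓝 x] fun _ => φ x := by
    filter_upwards [hmax, hmin] with z hz hz' using le_antisymm hz hz'
  simp [hconst.deriv.deriv_eq] at hpos

lemma nonneg_of_hasDerivAt_of_forall_le_right {g : ℝ → ℝ} {g' a t : ℝ} (hat : a < t)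
    (hg : HasDerivAt g g' t) (hmax : ∀ s ∈ Icc a t, g s ≤ g t) : 0 ≤ g' := by
  have hslope := (hasDerivWithinAt_iff_tendsto_slope' (s := Iio t) (by simp)).1 hg.hasDerivWithinAt
  refine ge_of_tendsto hslope ?_
  filter_upwards [Ioo_mem_nhdsLT hat] with s hs
  rw [slope_def_field]
  exact div_nonneg_of_nonpos (sub_nonpos.2 (hmax s ⟨hs.1.le, hs.2.le⟩)) (sub_nonpos.2 hs.2.le)

-- Subtracting `ε (t - t₀)` makes the time derivative strictly negative at a spatial maximum, so the
-- maximum over the space-time rectangle lies on the parabolic boundary.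
lemma le_of_parabolic_boundary_le {φ : ℝ → ℝ → ℝ} {t₀ t₁ a b N : ℝ}
    (hφ : ContinuousOn (fun p : ℝ × ℝ => φ p.1 p.2) (Icc t₀ t₁ ×ˢ Icc a b))
    (hinit : ∀ y ∈ Icc a b, φ t₀ y ≤ N) (hleft : ∀ t ∈ Icc t₀ t₁, φ t a ≤ N)
    (hright : ∀ t ∈ Icc t₀ t₁, φ t b ≤ N)
    (hint : ∀ t ∈ Ioc t₀ t₁, ∀ y ∈ Ioo a b, IsLocalMax (φ t) y →
      ∃ d ≤ 0, HasDerivAt (fun s => φ s y) d t)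
    {t y : ℝ} (ht : t ∈ Icc t₀ t₁) (hy : y ∈ Icc a b) : φ t y ≤ N := by
  suffices hε : ∀ ε > 0, φ t y ≤ N + ε * (t - t₀) by
    have hlim : Tendsto (fun ε : ℝ => N + ε * (t - t₀)) (𝓝[>] 0) (𝓝 N) :=
      (Continuous.tendsto' (by fun_prop) 0 N (by simp)).mono_left nhdsWithin_le_nhds
    exact ge_of_tendsto hlim (eventually_mem_nhdsWithin.mono hε)
  intro ε hε
  obtain ⟨⟨τ, x⟩, ⟨hτ, hx⟩, hmax⟩ := (isCompact_Icc.prod isCompact_Icc).exists_isMaxOn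
    (f := fun p : ℝ × ℝ => φ p.1 p.2 - ε * (p.1 - t₀)) ⟨(t, y), ht, hy⟩
    (hφ.sub (by fun_prop))
  have hle : ∀ s ∈ Icc t₀ t₁, ∀ z ∈ Icc a b, φ s z - ε * (s - t₀) ≤ φ τ x - ε * (τ - t₀) :=
    fun s hs z hz => hmax (mk_mem_prod hs hz)
  dsimp only at hτ hx
  suffices hN : φ τ x - ε * (τ - t₀) ≤ N by linarith [hle t ht y hy]
  have hpen : 0 ≤ ε * (τ - t₀) := mul_nonneg hε.le (sub_nonneg.2 hτ.1)
  by_contra! hlt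
  have hτ₀ : t₀ < τ := hτ.1.lt_of_ne (by rintro rfl; linarith [hinit x hx])
  have hxa : a < x := hx.1.lt_of_ne (by rintro rfl; linarith [hleft τ hτ])
  have hxb : x < b := hx.2.lt_of_ne (by rintro rfl; linarith [hright τ hτ])
  have hlocal : IsLocalMax (φ τ) x := by
    filter_upwards [Icc_mem_nhds hxa hxb] with z hz
    linarith [hle τ hτ z hz]
  obtain ⟨d, hd, hderiv⟩ := hint τ ⟨hτ₀, hτ.2⟩ x ⟨hxa, hxb⟩ hlocal
  have hpenalized : HasDerivAt (fun s => φ s x - ε * (s - t₀)) (d - ε * 1) τ :=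
    hderiv.sub (((hasDerivAt_id τ).sub_const t₀).const_mul ε)
  have := nonneg_of_hasDerivAt_of_forall_le_right hτ₀ hpenalized
    fun s hs => hle s ⟨hs.1, hs.2.trans hτ.2⟩ x hx
  linarith

/-- A Landau–Kolmogorov inequality on a bounded interval. -/
lemma norm_deriv_le_of_norm_le_of_norm_deriv2_le {E : Type*} [NormedAddCommGroup E]
    [NormedSpace ℝ E] {f f' f'' : ℝ → E} {a b M Z h y : ℝ}
    (hf : ∀ x ∈ Icc a b, HasDerivAt f (f' x) x) (hf' : ∀ x ∈ Icc a b, HasDerivAt f' (f'' x) x)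
    (hM : ∀ x ∈ Icc a b, ‖f x‖ ≤ M) (hZ : ∀ x ∈ Icc a b, ‖f'' x‖ ≤ Z) (hh : 0 < h)
    (hab : 2 * h ≤ b - a) (hy : y ∈ Icc a b) : ‖f' y‖ ≤ 2 * M / h + Z * h := by
  obtain ⟨x, hx, hxy⟩ : ∃ x ∈ Icc a b, |x - y| = h := by
    rcases le_total (y + h) b with hb | hb
    · exact ⟨y + h, ⟨by linarith [hy.1], hb⟩, by simp [abs_of_pos hh]⟩
    · exact ⟨y - h, ⟨by linarith, by linarith [hy.2]⟩, by simp [abs_of_pos hh]⟩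
  have hsub : uIcc y x ⊆ Icc a b := uIcc_subset_Icc hy hx
  have hf'_sub : ∀ s ∈ uIcc y x, ‖f' s - f' y‖ ≤ Z * h := by
    intro s hs
    calc ‖f' s - f' y‖ ≤ Z * ‖s - y‖ :=
          (convex_uIcc y x).norm_image_sub_le_of_norm_hasDerivWithin_le
            (fun z hz => (hf' z (hsub hz)).hasDerivWithinAt) (fun z hz => hZ z (hsub hz))
            left_mem_uIcc hs
      _ ≤ Z * h := by
          rw [← hxy]
          exact mul_le_mul_of_nonneg_left (abs_sub_left_of_mem_uIcc hs)
            ((norm_nonneg _).trans (hZ y hy))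
  have htaylor : ‖(f x - x • f' y) - (f y - y • f' y)‖ ≤ Z * h * ‖x - y‖ :=
    (convex_uIcc y x).norm_image_sub_le_of_norm_hasDerivWithin_le
      (f := fun s => f s - s • f' y) (f' := fun s => f' s - f' y)
      (fun s hs => ((hf s (hsub hs)).sub
        (by simpa using (hasDerivAt_id s).smul_const (f' y))).hasDerivWithinAt)
      hf'_sub left_mem_uIcc right_mem_uIcc
  have hmul : h * ‖f' y‖ ≤ 2 * M + Z * h * h := by
    calc h * ‖f' y‖ = ‖(x - y) • f' y‖ := by rw [norm_smul, Real.norm_eq_abs, hxy]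
      _ = ‖f x - f y - ((f x - x • f' y) - (f y - y • f' y))‖ := by
          congr 1; rw [sub_smul]; abel
      _ ≤ (‖f x‖ + ‖f y‖) + Z * h * h := by
          rw [Real.norm_eq_abs, hxy] at htaylor
          exact (norm_sub_le _ _).trans (add_le_add (norm_sub_le _ _) htaylor)
      _ ≤ 2 * M + Z * h * h := by linarith [hM x hx, hM y hy]
  calc ‖f' y‖ ≤ (2 * M + Z * h * h) / h := (le_div_iff₀' hh).2 hmul
    _ = 2 * M / h + Z * h := by field_simp

lemma le_exp_mul_of_deriv_le {f f' : ℝ → ℝ} {r t : ℝ} (hf : ContinuousOn f (Ici 0))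
    (hderiv : ∀ x > 0, HasDerivAt f (f' x) x) (hle : ∀ x > 0, f' x ≤ -r * f x) (ht : 0 ≤ t) :
    f t ≤ Real.exp (-r * t) * f 0 := by
  have hanti : AntitoneOn (fun x => Real.exp (r * x) * f x) (Ici 0) := by
    refine antitoneOn_of_hasDerivWithinAt_nonpos (convex_Ici 0)
      (f' := fun x => Real.exp (r * x) * (r * 1) * f x + Real.exp (r * x) * f' x)
      (ContinuousOn.mul (by fun_prop) hf) (fun x hx => ?_) (fun x hx => ?_)
    all_goals rw [interior_Ici, mem_Ioi] at hx
    · exact (((hasDerivAt_id x).const_mul r).exp.mul (hderiv x hx)).hasDerivWithinAt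
    · calc Real.exp (r * x) * (r * 1) * f x + Real.exp (r * x) * f' x
          = Real.exp (r * x) * (r * f x + f' x) := by ring
        _ ≤ 0 := mul_nonpos_of_nonneg_of_nonpos (Real.exp_nonneg _) (by linarith [hle x hx])
  have h0 : Real.exp (r * t) * f t ≤ f 0 := by simpa using hanti self_mem_Ici ht ht
  calc f t = Real.exp (-r * t) * (Real.exp (r * t) * f t) := by
        rw [← mul_assoc, ← Real.exp_add]; simp
    _ ≤ Real.exp (-r * t) * f 0 := by gcongr

lemma le_exp_one_sub_div_mul_of_contraction {f : ℝ → ℝ} {T t : ℝ} (hT : 0 < T)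
    (hanti : AntitoneOn f (Ici 0)) (h0 : 0 ≤ f 0)
    (hcontr : ∀ s ≥ 0, f (s + T) ≤ Real.exp (-1) * f s) (ht : 0 ≤ t) :
    f t ≤ Real.exp (1 - t / T) * f 0 := by
  have hiter (n : ℕ) : f (n * T) ≤ Real.exp (-n) * f 0 := by
    induction n with
    | zero => simp
    | succ n ih =>
      calc f ((n + 1 : ℕ) * T) = f (n * T + T) := by push_cast; ring_nf
        _ ≤ Real.exp (-1) * (Real.exp (-n) * f 0) :=
            (hcontr _ (by positivity)).trans (by gcongr)
        _ = Real.exp (-(n + 1 : ℕ)) * f 0 := by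
            rw [← mul_assoc, ← Real.exp_add]; push_cast; ring_nf
  set n := ⌊t / T⌋₊
  have hn : n * T ≤ t := (le_div_iff₀ hT).1 (Nat.floor_le (by positivity))
  calc f t ≤ f (n * T) := hanti (mem_Ici.2 (by positivity)) ht hn
    _ ≤ Real.exp (-n) * f 0 := hiter n
    _ ≤ Real.exp (1 - t / T) * f 0 := by
        gcongr
        linarith [Nat.lt_floor_add_one (t / T)]

end Calculus

section InnerIntegral

variable {F : Type*} [NormedAddCommGroup F] [InnerProductSpace ℝ F] {a b : ℝ}

lemma integral_inner_deriv_eq_neg {f g : ℝ → F} (hf : ContDiff ℝ 1 f) (hg : ContDiff ℝ 1 g)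
    (ha : f a = 0) (hb : f b = 0) :
    ∫ y in a..b, ⟪f y, deriv g y⟫ = -∫ y in a..b, ⟪deriv f y, g y⟫ := by
  have hfg' : IntervalIntegrable (fun y => ⟪f y, deriv g y⟫) volume a b :=
    (hf.continuous.inner hg.continuous_deriv_one).intervalIntegrable _ _
  have hf'g : IntervalIntegrable (fun y => ⟪deriv f y, g y⟫) volume a b :=
    (hf.continuous_deriv_one.inner hg.continuous).intervalIntegrable _ _
  have hFTC : ∫ y in a..b, (⟪f y, deriv g y⟫ + ⟪deriv f y, g y⟫) = 0 := by
    rw [intervalIntegral.integral_eq_sub_of_hasDerivAt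
      (fun y _ => (hf.differentiable_one y).hasDerivAt.inner ℝ
        (hg.differentiable_one y).hasDerivAt) (hfg'.add hf'g)]
    simp [ha, hb]
  rw [intervalIntegral.integral_add hfg' hf'g] at hFTC
  linarith

lemma integral_inner_comm (f g : ℝ → F) :
    ∫ y in a..b, ⟪f y, g y⟫ = ∫ y in a..b, ⟪g y, f y⟫ :=
  intervalIntegral.integral_congr fun _ _ => real_inner_comm _ _

lemma hasDerivAt_mul_tan {c m y : ℝ} (hcos : Real.cos (c * (y - m)) ≠ 0) :
    HasDerivAt (fun y => c * Real.tan (c * (y - m)))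
      (c ^ 2 + (c * Real.tan (c * (y - m))) ^ 2) y := by
  refine (((Real.hasDerivAt_tan hcos).comp y
    (((hasDerivAt_id y).sub_const m).const_mul c)).const_mul c).congr_deriv ?_
  simp only [Real.tan_eq_sin_div_cos]
  field_simp
  linear_combination (-c ^ 2) * Real.sin_sq_add_cos_sq (c * (y - m))

-- Integrate the derivative of `q ‖f‖²`, where `q = c tan (c (y - m))` with `m` the midpoint solves
-- the Riccati equation `q' = c² + q²`.
lemma sq_mul_integral_norm_sq_le_integral_norm_deriv_sq {f : ℝ → F} {c : ℝ} (hf : ContDiff ℝ 1 f)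
    (hab : a ≤ b) (ha : f a = 0) (hb : f b = 0) (hc : 0 ≤ c) (hcπ : c * (b - a) < Real.pi) :
    c ^ 2 * ∫ y in a..b, ‖f y‖ ^ 2 ≤ ∫ y in a..b, ‖deriv f y‖ ^ 2 := by
  have hfc := hf.continuous
  have hf' := hf.continuous_deriv_one
  set m := (a + b) / 2
  let q (y : ℝ) : ℝ := c * Real.tan (c * (y - m))
  have hq (y : ℝ) (hy : y ∈ uIcc a b) : HasDerivAt q (c ^ 2 + q y ^ 2) y := by
    rw [uIcc_of_le hab] at hy
    have hlo : c * (a - m) ≤ c * (y - m) := by gcongr; exact hy.1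
    have hhi : c * (y - m) ≤ c * (b - m) := by gcongr; exact hy.2
    refine hasDerivAt_mul_tan (Real.cos_pos_of_mem_Ioo ?_).ne'
    simp only [m] at hlo hhi ⊢
    exact ⟨by linarith, by linarith⟩
  have hqc : ContinuousOn q (uIcc a b) := fun y hy => (hq y hy).continuousAt.continuousWithinAt
  have hint : IntervalIntegrable
      (fun y => (c ^ 2 + q y ^ 2) * ‖f y‖ ^ 2 + q y * (2 * ⟪f y, deriv f y⟫)) volume a b :=
    (((continuousOn_const.add (hqc.pow 2)).mul (by fun_prop)).add
      (hqc.mul (continuous_const.mul (hfc.inner hf')).continuousOn)).intervalIntegrable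
  have hzero := intervalIntegral.integral_eq_sub_of_hasDerivAt
    (fun y hy => (hq y hy).mul (hf.differentiable_one y).hasDerivAt.norm_sq) hint
  have hmono : ∫ y in a..b, (c ^ 2 * ‖f y‖ ^ 2 - ‖deriv f y‖ ^ 2) ≤
      ∫ y in a..b, ((c ^ 2 + q y ^ 2) * ‖f y‖ ^ 2 + q y * (2 * ⟪f y, deriv f y⟫)) := by
    refine intervalIntegral.integral_mono_on hab
      (Continuous.intervalIntegrable (by fun_prop) _ _) hint fun y _ => ?_
    have hsq : 0 ≤ ‖q y • f y + deriv f y‖ ^ 2 := sq_nonneg _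
    rw [norm_add_sq_real, real_inner_smul_left, norm_smul, mul_pow, Real.norm_eq_abs,
      sq_abs] at hsq
    linarith
  rw [hzero, intervalIntegral.integral_sub (Continuous.intervalIntegrable (by fun_prop) _ _)
    (Continuous.intervalIntegrable (by fun_prop) _ _),
    intervalIntegral.integral_const_mul] at hmono
  simpa [ha, hb] using hmono

lemma slope_integral_inner_of_symm {u g : ℝ → ℝ → F} {s t : ℝ}
    (hsymm : ∫ y in a..b, ⟪u s y, g t y⟫ = ∫ y in a..b, ⟪u t y, g s y⟫)
    (hu : ∀ s, Continuous (u s)) (hg : ∀ s, Continuous (g s)) :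
    slope (fun s => ∫ y in a..b, ⟪u s y, g s y⟫) t s =
      ∫ y in a..b, ⟪slope (fun s => u s y) t s, g s y + g t y⟫ := by
  have hint (r r' : ℝ) : IntervalIntegrable (fun y => ⟪u r y, g r' y⟫) volume a b :=
    ((hu r).inner (hg r')).intervalIntegrable _ _
  simp only [slope, vsub_eq_sub, real_inner_smul_left, intervalIntegral.integral_const_mul,
    smul_eq_mul]
  congr 1
  simp only [inner_sub_left, inner_add_right]
  rw [intervalIntegral.integral_add ((hint s s).sub (hint t s)) ((hint s t).sub (hint t t)),
    intervalIntegral.integral_sub (hint s s) (hint t s),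
    intervalIntegral.integral_sub (hint s t) (hint t t), hsymm]
  ring

-- By symmetry only `u` has to be differentiable in time; `g` may be a derivative of `u`.
lemma hasDerivAt_integral_inner_of_symm {u g : ℝ → ℝ → F} {p : ℝ → F} {t N M : ℝ} (hab : a ≤ b)
    (hsymm : ∀ᶠ s in 𝓝 t, ∫ y in a..b, ⟪u s y, g t y⟫ = ∫ y in a..b, ⟪u t y, g s y⟫)
    (hu : ∀ s, Continuous (u s)) (hg : ∀ s, Continuous (g s))
    (hlip : ∀ᶠ s in 𝓝 t, ∀ y ∈ Icc a b, ‖u s y - u t y‖ ≤ N * |s - t|)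
    (hbdd : ∀ᶠ s in 𝓝 t, ∀ y ∈ Icc a b, ‖g s y‖ ≤ M)
    (hderiv : ∀ y ∈ Icc a b, HasDerivAt (fun s => u s y) (p y) t)
    (hlim : ∀ y ∈ Icc a b, Tendsto (fun s => g s y) (𝓝 t) (𝓝 (g t y))) :
    HasDerivAt (fun s => ∫ y in a..b, ⟪u s y, g s y⟫) (2 * ∫ y in a..b, ⟪p y, g t y⟫) t := by
  have hIoc : uIoc a b ⊆ Icc a b := uIoc_of_le hab ▸ Ioc_subset_Icc_self
  have hDCT : Tendsto (fun s => ∫ y in a..b, ⟪slope (fun s => u s y) t s, g s y + g t y⟫)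
      (𝓝[≠] t) (𝓝 (∫ y in a..b, ⟪p y, g t y + g t y⟫)) := by
    refine intervalIntegral.tendsto_integral_filter_of_dominated_convergence
      (fun _ => N * (M + M)) (.of_forall fun s => Continuous.aestronglyMeasurable ?_) ?_
      intervalIntegrable_const (.of_forall fun y hy => ?_)
    · have := hu s
      have := hu t
      have := hg s
      have := hg t
      simp only [slope, vsub_eq_sub]
      fun_prop
    · filter_upwards [nhdsWithin_le_nhds hlip, nhdsWithin_le_nhds hbdd, self_mem_nhdsWithin]
        with s hlip_s hbdd_s hst
      refine .of_forall fun y hy => (norm_inner_le_norm _ _).trans ?_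
      have hslope : ‖slope (fun s => u s y) t s‖ ≤ N := by
        rw [slope, vsub_eq_sub, norm_smul, norm_inv, Real.norm_eq_abs,
          inv_mul_le_iff₀ (abs_pos.2 (sub_ne_zero.2 hst)), mul_comm]
        exact hlip_s y (hIoc hy)
      have hg_sum : ‖g s y + g t y‖ ≤ M + M :=
        norm_add_le_of_le (hbdd_s y (hIoc hy)) (hbdd.self_of_nhds y (hIoc hy))
      exact mul_le_mul hslope hg_sum (norm_nonneg _) ((norm_nonneg _).trans hslope)
    · exact (hasDerivAt_iff_tendsto_slope.1 (hderiv y (hIoc hy))).inner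
        (((hlim y (hIoc hy)).mono_left nhdsWithin_le_nhds).add tendsto_const_nhds)
  have hval : ∫ y in a..b, ⟪p y, g t y + g t y⟫ = 2 * ∫ y in a..b, ⟪p y, g t y⟫ := by
    rw [← intervalIntegral.integral_const_mul]
    simp_rw [inner_add_right, two_mul]
  rw [hasDerivAt_iff_tendsto_slope, ← hval]
  refine hDCT.congr' ?_
  filter_upwards [nhdsWithin_le_nhds hsymm] with s hs
    using (slope_integral_inner_of_symm hs hu hg).symm

end InnerIntegral

section CouetteOperator

open Complex (I)

/-- The linearized vorticity operator `ν (∂_y² - κ²) - i κ y` around Couette flow at streamwise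
frequency `κ`. On a periodic channel `κ` is an integer, but any real frequency is allowed here. -/
noncomputable def couetteOperator (ν κ : ℝ) (f : ℝ → ℂ) (y : ℝ) : ℂ :=
  ν * (deriv (deriv f) y - κ ^ 2 * f y) - I * κ * y * f y

variable {ν κ y : ℝ} {f g : ℝ → ℂ}

lemma continuous_couetteOperator (hf : ContDiff ℝ 2 f) : Continuous (couetteOperator ν κ f) := by
  have := (contDiff_one_deriv_of_contDiff_two hf).continuous_deriv_one
  have hfc := hf.continuous
  unfold couetteOperator
  fun_prop

lemma couetteOperator_sub (hf : ContDiff ℝ 2 f) (hg : ContDiff ℝ 2 g) :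
    couetteOperator ν κ (fun x => f x - g x) y =
      couetteOperator ν κ f y - couetteOperator ν κ g y := by
  have hderiv : deriv (fun x => f x - g x) = fun x => deriv f x - deriv g x := by
    ext x
    exact deriv_fun_sub (hf.differentiable two_ne_zero x) (hg.differentiable two_ne_zero x)
  rw [couetteOperator, hderiv, deriv_fun_sub
    ((contDiff_one_deriv_of_contDiff_two hf).differentiable_one y)
    ((contDiff_one_deriv_of_contDiff_two hg).differentiable_one y), couetteOperator,
    couetteOperator]
  ring

lemma inner_couetteOperator_left (w : ℂ) :
    ⟪couetteOperator ν κ f y, w⟫ =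
      ν * ⟪deriv (deriv f) y, w⟫ - ν * κ ^ 2 * ⟪f y, w⟫ - κ * (y * ⟪I * f y, w⟫) := by
  have hsmul : couetteOperator ν κ f y =
      ν • deriv (deriv f) y - (ν * κ ^ 2) • f y - κ • y • (I * f y) := by
    simp only [couetteOperator, Complex.real_smul]
    push_cast
    ring
  simp only [hsmul, inner_sub_left, real_inner_smul_left]

lemma inner_I_mul_left (z w : ℂ) : ⟪I * z, w⟫ = -⟪z, I * w⟫ := by
  simp only [Complex.inner, map_mul, Complex.conj_I, Complex.mul_re, Complex.mul_im,
    Complex.neg_re, Complex.neg_im, Complex.I_re, Complex.I_im]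
  ring

lemma inner_I_mul_self (z : ℂ) : ⟪I * z, z⟫ = 0 := by
  linarith [inner_I_mul_left z z, real_inner_comm z (I * z)]

lemma inner_deriv_deriv_nonpos_of_isLocalMax {F : Type*} [NormedAddCommGroup F]
    [InnerProductSpace ℝ F] {f : ℝ → F} (hf : ContDiff ℝ 2 f)
    (hmax : IsLocalMax (fun x => ‖f x‖ ^ 2) y) : ⟪f y, deriv (deriv f) y⟫ ≤ 0 := by
  have hderiv : deriv (fun x => ⟪f y, f x⟫) = fun x => ⟪f y, deriv f x⟫ := by
    ext x
    simpa using ((hasDerivAt_const x (f y)).inner ℝ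
      (hf.differentiable two_ne_zero x).hasDerivAt).deriv
  have hderiv2 : deriv (fun x => ⟪f y, deriv f x⟫) y = ⟪f y, deriv (deriv f) y⟫ := by
    simpa using ((hasDerivAt_const y (f y)).inner ℝ
      ((contDiff_one_deriv_of_contDiff_two hf).differentiable_one y).hasDerivAt).deriv
  have hlocal : IsLocalMax (fun x => ⟪f y, f x⟫) y := by
    filter_upwards [hmax] with x hx
    calc ⟪f y, f x⟫ ≤ ‖f y‖ * ‖f x‖ := real_inner_le_norm _ _
      _ ≤ ‖f y‖ * ‖f y‖ := by gcongr; exact (sq_le_sq₀ (norm_nonneg _) (norm_nonneg _)).1 hx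
      _ = ⟪f y, f y⟫ := (real_inner_self_eq_norm_mul_norm _).symm
  have := deriv_deriv_nonpos_of_isLocalMax
    (continuous_const.inner hf.continuous).continuousAt hlocal
  rwa [hderiv, hderiv2] at this

end CouetteOperator

/-- A classical solution `ω t y` of `∂ₜω = couetteOperator ν κ ω` on `[0, ∞) × [a, b]` with zero
Dirichlet boundary values. It is extended to all of `ℝ × ℝ` so that the regularity
can be phrased with `ContDiff` on the whole line. -/
structure IsCouetteSolution (ν κ a b : ℝ) (ω : ℝ → ℝ → ℂ) : Prop where
  continuous : Continuous fun p : ℝ × ℝ => ω p.1 p.2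
  contDiff_time : ∀ y, ContDiff ℝ 1 fun t => ω t y
  contDiff_space : ∀ t, ContDiff ℝ 2 (ω t)
  deriv_time : ∀ t > 0, ∀ y ∈ Icc a b,
    deriv (fun s => ω s y) t = couetteOperator ν κ (ω t) y
  left_eq_zero : ∀ t ≥ 0, ω t a = 0
  right_eq_zero : ∀ t ≥ 0, ω t b = 0

namespace IsCouetteSolution

open Complex (I)

variable {ν κ a b t y δ : ℝ} {ω ω₁ ω₂ : ℝ → ℝ → ℂ}

lemma hasDerivAt_time (h : IsCouetteSolution ν κ a b ω) (ht : 0 < t) (hy : y ∈ Icc a b) :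
    HasDerivAt (fun s => ω s y) (couetteOperator ν κ (ω t) y) t :=
  h.deriv_time t ht y hy ▸ ((h.contDiff_time y).differentiable_one t).hasDerivAt

lemma contDiff_deriv_space (h : IsCouetteSolution ν κ a b ω) (t : ℝ) :
    ContDiff ℝ 1 (deriv (ω t)) :=
  contDiff_one_deriv_of_contDiff_two (h.contDiff_space t)

lemma hasDerivAt_space (h : IsCouetteSolution ν κ a b ω) (t y : ℝ) :
    HasDerivAt (ω t) (deriv (ω t) y) y :=
  ((h.contDiff_space t).differentiable two_ne_zero y).hasDerivAt

lemma hasDerivAt_deriv_space (h : IsCouetteSolution ν κ a b ω) (t y : ℝ) :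
    HasDerivAt (deriv (ω t)) (deriv (deriv (ω t)) y) y :=
  ((h.contDiff_deriv_space t).differentiable_one y).hasDerivAt

lemma shift (h : IsCouetteSolution ν κ a b ω) {r : ℝ} (hr : 0 ≤ r) :
    IsCouetteSolution ν κ a b fun t => ω (r + t) where
  continuous := h.continuous.comp (f := fun p : ℝ × ℝ => (r + p.1, p.2)) (by fun_prop)
  contDiff_time y := (h.contDiff_time y).comp (contDiff_const.add contDiff_id)
  contDiff_space t := h.contDiff_space (r + t)
  deriv_time t ht y hy := by
    rw [deriv_comp_const_add (fun s => ω s y) r t]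
    exact h.deriv_time (r + t) (by linarith) y hy
  left_eq_zero t ht := h.left_eq_zero (r + t) (by linarith)
  right_eq_zero t ht := h.right_eq_zero (r + t) (by linarith)

lemma sub (h₁ : IsCouetteSolution ν κ a b ω₁) (h₂ : IsCouetteSolution ν κ a b ω₂) :
    IsCouetteSolution ν κ a b fun t y => ω₁ t y - ω₂ t y where
  continuous := h₁.continuous.sub h₂.continuous
  contDiff_time y := (h₁.contDiff_time y).sub (h₂.contDiff_time y)
  contDiff_space t := (h₁.contDiff_space t).sub (h₂.contDiff_space t)
  deriv_time t ht y hy := by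
    rw [couetteOperator_sub (h₁.contDiff_space t) (h₂.contDiff_space t)]
    exact ((h₁.hasDerivAt_time ht hy).sub (h₂.hasDerivAt_time ht hy)).deriv
  left_eq_zero t ht := by rw [h₁.left_eq_zero t ht, h₂.left_eq_zero t ht, sub_zero]
  right_eq_zero t ht := by rw [h₁.right_eq_zero t ht, h₂.right_eq_zero t ht, sub_zero]

-- The transport term `i κ y ω` is orthogonal to `ω`, so `‖ω‖²` obeys the maximum principle.
lemma norm_le_of_norm_zero_le (h : IsCouetteSolution ν κ a b ω) (hν : 0 ≤ ν) {N : ℝ}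
    (hN : ∀ y ∈ Icc a b, ‖ω 0 y‖ ≤ N) (ht : 0 ≤ t) (hy : y ∈ Icc a b) : ‖ω t y‖ ≤ N := by
  have hN0 : 0 ≤ N := (norm_nonneg _).trans (hN y hy)
  refine (sq_le_sq₀ (norm_nonneg _) hN0).1 <|
    le_of_parabolic_boundary_le (φ := fun s x => ‖ω s x‖ ^ 2) (h.continuous.norm.pow 2).continuousOn
      (fun x hx => pow_le_pow_left₀ (norm_nonneg _) (hN x hx) 2)
      (fun s hs => by simp [h.left_eq_zero s hs.1, sq_nonneg])
      (fun s hs => by simp [h.right_eq_zero s hs.1, sq_nonneg])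
      (fun s hs x hx hmax => ?_) ⟨ht, le_rfl⟩ hy
  refine ⟨_, ?_, (h.hasDerivAt_time hs.1 (Ioo_subset_Icc_self hx)).norm_sq⟩
  have hdiff : ν * ⟪ω s x, deriv (deriv (ω s)) x⟫ ≤ 0 := mul_nonpos_of_nonneg_of_nonpos hν
    (inner_deriv_deriv_nonpos_of_isLocalMax (h.contDiff_space s) hmax)
  have hzero : 0 ≤ ν * κ ^ 2 * ‖ω s x‖ ^ 2 := by positivity
  rw [real_inner_comm, inner_couetteOperator_left, inner_I_mul_self, real_inner_self_eq_norm_sq,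
    real_inner_comm]
  linarith

lemma exists_norm_le (h : IsCouetteSolution ν κ a b ω) (hν : 0 ≤ ν) :
    ∃ M : ℝ, ∀ t ≥ 0, ∀ y ∈ Icc a b, ‖ω t y‖ ≤ M := by
  obtain ⟨M, hM⟩ := isCompact_Icc.exists_bound_of_continuousOn
    (h.contDiff_space 0).continuous.continuousOn
  exact ⟨M, fun t ht y hy => h.norm_le_of_norm_zero_le hν hM ht hy⟩

lemma exists_ball_norm_deriv_time_le (h : IsCouetteSolution ν κ a b ω) (hδ : 0 < δ) :
    ∃ t₀ r N : ℝ, 0 < r ∧ Metric.ball t₀ r ⊆ Ioo 0 δ ∧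
      ∀ t ∈ Metric.ball t₀ r, ∀ y ∈ Icc a b, ‖deriv (fun s => ω s y) t‖ ≤ N := by
  obtain ⟨V, hVU, hV, ⟨t₀, ht₀⟩, N, hN⟩ := exists_isOpen_forall_norm_le_of_pointwise
    (g := fun (y : Icc a b) t => deriv (fun s => ω s y) t)
    (fun y => (h.contDiff_time y).continuous_deriv_one) (isOpen_Ioo (a := 0) (b := δ))
    (nonempty_Ioo.2 hδ) fun t ht => by
      obtain ⟨C, hC⟩ := isCompact_Icc.exists_bound_of_continuousOn (s := Icc a b)
        (continuous_couetteOperator (ν := ν) (κ := κ) (h.contDiff_space t)).continuousOn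
      exact ⟨C, fun y => (h.deriv_time t ht.1 y y.2).symm ▸ hC y y.2⟩
  obtain ⟨r, hr, hball⟩ := Metric.isOpen_iff.1 hV t₀ ht₀
  exact ⟨t₀, r, N, hr, hball.trans hVU, fun t ht y hy => hN t (hball ht) ⟨y, hy⟩⟩

-- A Lipschitz bound in time near `t₀` is propagated to later times by the maximum principle,
-- applied to the difference of two time shifts of the solution.
lemma exists_norm_deriv_time_le (h : IsCouetteSolution ν κ a b ω) (hν : 0 ≤ ν) (hδ : 0 < δ) :
    ∃ N : ℝ, ∀ t ≥ δ, ∀ y ∈ Icc a b, ‖deriv (fun s => ω s y) t‖ ≤ N := by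
  obtain ⟨t₀, r, N, hr, hball, hN⟩ := h.exists_ball_norm_deriv_time_le hδ
  have ht₀ := hball (Metric.mem_ball_self hr)
  have hlip : ∀ s ∈ Metric.ball t₀ r, ∀ y ∈ Icc a b, ‖ω s y - ω t₀ y‖ ≤ N * ‖s - t₀‖ :=
    fun s hs y hy => (convex_ball t₀ r).norm_image_sub_le_of_norm_deriv_le (f := fun s => ω s y)
      (fun x _ => (h.contDiff_time y).differentiable_one x) (fun x hx => hN x hx y hy)
      (Metric.mem_ball_self hr) hs
  refine ⟨N, fun t ht y hy => norm_deriv_le_of_lip'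
    ((norm_nonneg _).trans (hN t₀ (Metric.mem_ball_self hr) y hy)) ?_⟩
  filter_upwards [Metric.ball_mem_nhds t hr] with s hs
  have hs' : t₀ + (s - t) ∈ Metric.ball t₀ r := by simpa [Real.dist_eq] using hs
  have hdiff := ((h.shift (hball hs').1.le).sub (h.shift ht₀.1.le)).norm_le_of_norm_zero_le hν
    (N := N * ‖s - t‖) (fun x hx => by simpa using hlip _ hs' x hx)
    (t := t - t₀) (by linarith [ht₀.2]) hy
  simpa [show t₀ + (s - t) + (t - t₀) = s by ring] using hdiff

lemma exists_norm_sub_le (h : IsCouetteSolution ν κ a b ω) (hν : 0 ≤ ν) (hδ : 0 < δ) :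
    ∃ N : ℝ, ∀ s ≥ δ, ∀ t ≥ δ, ∀ y ∈ Icc a b, ‖ω s y - ω t y‖ ≤ N * |s - t| := by
  obtain ⟨N, hN⟩ := h.exists_norm_deriv_time_le hν hδ
  exact ⟨N, fun s hs t ht y hy => (convex_Ici δ).norm_image_sub_le_of_norm_deriv_le
    (f := fun s => ω s y) (fun x _ => (h.contDiff_time y).differentiable_one x)
    (fun x hx => hN x hx y hy) ht hs⟩

lemma deriv_deriv_eq (h : IsCouetteSolution ν κ a b ω) (hν : ν ≠ 0) (ht : 0 < t)
    (hy : y ∈ Icc a b) : deriv (deriv (ω t)) y =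
      (ν : ℂ)⁻¹ * (deriv (fun s => ω s y) t + I * κ * y * ω t y) + κ ^ 2 * ω t y := by
  have hνC : (ν : ℂ) ≠ 0 := Complex.ofReal_ne_zero.2 hν
  rw [h.deriv_time t ht y hy, couetteOperator]
  field_simp
  ring

lemma exists_norm_deriv_deriv_le (h : IsCouetteSolution ν κ a b ω) (hν : 0 < ν) (hδ : 0 < δ) :
    ∃ Z : ℝ, ∀ t ≥ δ, ∀ y ∈ Icc a b, ‖deriv (deriv (ω t)) y‖ ≤ Z := by
  obtain ⟨M, hM⟩ := h.exists_norm_le hν.le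
  obtain ⟨N, hN⟩ := h.exists_norm_deriv_time_le hν.le hδ
  obtain ⟨L, hL⟩ := isCompact_Icc.exists_bound_of_continuousOn (s := Icc a b)
    (f := fun y : ℝ => I * κ * y) (by fun_prop)
  refine ⟨‖(ν : ℂ)⁻¹‖ * (N + L * M) + ‖(κ : ℂ) ^ 2‖ * M, fun t ht y hy => ?_⟩
  have hL0 : 0 ≤ L := (norm_nonneg _).trans (hL y hy)
  rw [h.deriv_deriv_eq hν.ne' (hδ.trans_le ht) hy]
  refine norm_add_le_of_le ((norm_mul _ _).trans_le ?_) ((norm_mul _ _).trans_le ?_)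
  · gcongr
    refine norm_add_le_of_le (hN t ht y hy) ((norm_mul _ _).trans_le ?_)
    gcongr
    exacts [hL y hy, hM t (hδ.le.trans ht) y hy]
  · gcongr
    exact hM t (hδ.le.trans ht) y hy

lemma exists_norm_deriv_le (h : IsCouetteSolution ν κ a b ω) (hν : 0 < ν) (hab : a < b)
    (hδ : 0 < δ) : ∃ Z : ℝ, ∀ t ≥ δ, ∀ y ∈ Icc a b, ‖deriv (ω t) y‖ ≤ Z := by
  obtain ⟨M, hM⟩ := h.exists_norm_le hν.le
  obtain ⟨Z, hZ⟩ := h.exists_norm_deriv_deriv_le hν hδ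
  exact ⟨2 * M / ((b - a) / 2) + Z * ((b - a) / 2), fun t ht y hy =>
    norm_deriv_le_of_norm_le_of_norm_deriv2_le (fun x _ => h.hasDerivAt_space t x)
      (fun x _ => h.hasDerivAt_deriv_space t x) (hM t (hδ.le.trans ht)) (hZ t ht)
      (by linarith) (by linarith) hy⟩

lemma tendsto_deriv_deriv (h : IsCouetteSolution ν κ a b ω) (hν : ν ≠ 0) (ht : 0 < t)
    (hy : y ∈ Icc a b) :
    Tendsto (fun s => deriv (deriv (ω s)) y) (𝓝 t) (𝓝 (deriv (deriv (ω t)) y)) := by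
  have hω := (h.contDiff_time y).continuous
  have hω' := (h.contDiff_time y).continuous_deriv_one
  have hrhs : Continuous fun s =>
      (ν : ℂ)⁻¹ * (deriv (fun s => ω s y) s + I * κ * y * ω s y) + κ ^ 2 * ω s y := by fun_prop
  rw [h.deriv_deriv_eq hν ht hy]
  refine (hrhs.tendsto t).congr' ?_
  filter_upwards [Ioi_mem_nhds ht] with s hs using (h.deriv_deriv_eq hν hs hy).symm

-- Landau–Kolmogorov at scale `√|s - t|` interpolates between the Lipschitz bound for `ω` and the
-- uniform bound for `∂_y²ω`.
lemma tendsto_deriv (h : IsCouetteSolution ν κ a b ω) (hν : 0 < ν) (hab : a < b) (ht : 0 < t)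
    (hy : y ∈ Icc a b) : Tendsto (fun s => deriv (ω s) y) (𝓝 t) (𝓝 (deriv (ω t) y)) := by
  obtain ⟨N, hN⟩ := h.exists_norm_sub_le hν.le (half_pos ht)
  obtain ⟨Z, hZ⟩ := h.exists_norm_deriv_deriv_le hν (half_pos ht)
  have hlim : Tendsto (fun s => √|s - t|) (𝓝 t) (𝓝 0) :=
    Continuous.tendsto' (by fun_prop) t 0 (by simp)
  have hlim' : Tendsto (fun s => (2 * N + (Z + Z)) * √|s - t|) (𝓝 t) (𝓝 0) := by
    simpa using hlim.const_mul (2 * N + (Z + Z))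
  refine tendsto_iff_norm_sub_tendsto_zero.2 (squeeze_zero' (.of_forall fun _ => norm_nonneg _)
    ?_ hlim')
  filter_upwards [Ioi_mem_nhds (half_lt_self ht),
    hlim.eventually_lt_const (half_pos (sub_pos.2 hab))] with s hs hsmall
  obtain rfl | hst := eq_or_ne s t
  · simp
  have ht' : t / 2 ≤ t := by linarith
  have hpos : 0 < √|s - t| := Real.sqrt_pos.2 (abs_pos.2 (sub_ne_zero.2 hst))
  have hLK : ‖deriv (ω s) y - deriv (ω t) y‖ ≤
      2 * (N * |s - t|) / √|s - t| + (Z + Z) * √|s - t| :=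
    norm_deriv_le_of_norm_le_of_norm_deriv2_le
      (f' := fun x => deriv (ω s) x - deriv (ω t) x)
      (fun x _ => (h.hasDerivAt_space s x).sub (h.hasDerivAt_space t x))
      (fun x _ => (h.hasDerivAt_deriv_space s x).sub (h.hasDerivAt_deriv_space t x))
      (hN s hs.le t ht') (fun x hx => norm_sub_le_of_le (hZ s hs.le x hx) (hZ t ht' x hx))
      hpos (by linarith) hy
  calc ‖deriv (ω s) y - deriv (ω t) y‖
      ≤ 2 * (N * (√|s - t| * √|s - t|)) / √|s - t| + (Z + Z) * √|s - t| := by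
        rwa [Real.mul_self_sqrt (abs_nonneg _)]
    _ = (2 * N + (Z + Z)) * √|s - t| := by field_simp

lemma hasDerivAt_integral_inner (h : IsCouetteSolution ν κ a b ω) (hν : 0 ≤ ν) (hab : a ≤ b)
    (ht : 0 < t) {g : ℝ → ℝ → ℂ} {M : ℝ} (hg : ∀ s, Continuous (g s))
    (hsymm : ∀ s ≥ 0, ∫ y in a..b, ⟪ω s y, g t y⟫ = ∫ y in a..b, ⟪ω t y, g s y⟫)
    (hbdd : ∀ s ≥ t / 2, ∀ y ∈ Icc a b, ‖g s y‖ ≤ M)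
    (hlim : ∀ y ∈ Icc a b, Tendsto (fun s => g s y) (𝓝 t) (𝓝 (g t y))) :
    HasDerivAt (fun s => ∫ y in a..b, ⟪ω s y, g s y⟫)
      (2 * ∫ y in a..b, ⟪couetteOperator ν κ (ω t) y, g t y⟫) t := by
  obtain ⟨N, hN⟩ := h.exists_norm_sub_le hν (half_pos ht)
  have hnear : ∀ᶠ s in 𝓝 t, t / 2 ≤ s := Ici_mem_nhds (half_lt_self ht)
  exact hasDerivAt_integral_inner_of_symm hab
    (hnear.mono fun s hs => hsymm s (by linarith)) (fun s => (h.contDiff_space s).continuous) hg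
    (hnear.mono fun s hs => hN s hs t (by linarith)) (hnear.mono hbdd)
    (fun y hy => h.hasDerivAt_time ht hy) hlim

end IsCouetteSolution

section Energy

open Complex (I)

/-- The `L²` energy of `f` on `[a, b]`. It is also used for the derivatives of `f`, which gives the
homogeneous Sobolev energies. -/
noncomputable def energy (a b : ℝ) (f : ℝ → ℂ) : ℝ := ∫ y in a..b, ‖f y‖ ^ 2

/-- The hypocoercive cross term `Re ∫ conj (f') (i f)`, which comes from the commutator of `∂_y`
with the multiplication by the shear velocity `y`. -/
noncomputable def shearCross (a b : ℝ) (f : ℝ → ℂ) : ℝ := ∫ y in a..b, ⟪deriv f y, I * f y⟫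

variable {ν κ a b : ℝ} {f g : ℝ → ℂ}

lemma energy_nonneg (hab : a ≤ b) : 0 ≤ energy a b f :=
  intervalIntegral.integral_nonneg hab fun _ _ => sq_nonneg _

lemma integral_inner_self : ∫ y in a..b, ⟪f y, f y⟫ = energy a b f := by
  simp only [energy, real_inner_self_eq_norm_sq]

-- The left-hand side is the energy of `f' + (c / 2) i f`.
lemma energy_deriv_add_shearCross_nonneg (hf : ContDiff ℝ 1 f) (hab : a ≤ b) (c : ℝ) :
    0 ≤ energy a b (deriv f) + c * shearCross a b f + c ^ 2 / 4 * energy a b f := by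
  have hfc := hf.continuous
  have := hf.continuous_deriv_one
  have hexpand (y : ℝ) : ‖deriv f y + (c / 2) • (I * f y)‖ ^ 2 =
      ‖deriv f y‖ ^ 2 + c * ⟪deriv f y, I * f y⟫ + c ^ 2 / 4 * ‖f y‖ ^ 2 := by
    rw [norm_add_sq_real, real_inner_smul_right, norm_smul, mul_pow, Real.norm_eq_abs, sq_abs,
      norm_mul, Complex.norm_I]
    ring
  have hsq : 0 ≤ ∫ y in a..b, ‖deriv f y + (c / 2) • (I * f y)‖ ^ 2 :=
    intervalIntegral.integral_nonneg hab fun _ _ => sq_nonneg _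
  simp only [hexpand] at hsq
  rwa [intervalIntegral.integral_add (Continuous.intervalIntegrable (by fun_prop) _ _)
      (Continuous.intervalIntegrable (by fun_prop) _ _),
    intervalIntegral.integral_add (Continuous.intervalIntegrable (by fun_prop) _ _)
      (Continuous.intervalIntegrable (by fun_prop) _ _),
    intervalIntegral.integral_const_mul, intervalIntegral.integral_const_mul] at hsq

lemma integral_inner_neg_deriv_deriv (hf : ContDiff ℝ 1 f) (hg : ContDiff ℝ 2 g) (ha : f a = 0)
    (hb : f b = 0) :
    ∫ y in a..b, ⟪f y, -deriv (deriv g) y⟫ = ∫ y in a..b, ⟪deriv f y, deriv g y⟫ := by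
  simp only [inner_neg_right, intervalIntegral.integral_neg,
    integral_inner_deriv_eq_neg hf (contDiff_one_deriv_of_contDiff_two hg) ha hb, neg_neg]

lemma integral_inner_neg_I_mul_deriv (hf : ContDiff ℝ 1 f) (hg : ContDiff ℝ 1 g) (ha : f a = 0)
    (hb : f b = 0) :
    ∫ y in a..b, ⟪f y, -(I * deriv g y)⟫ = ∫ y in a..b, ⟪g y, -(I * deriv f y)⟫ := by
  have hIBP := integral_inner_deriv_eq_neg hf (contDiff_const.mul hg : ContDiff ℝ 1 (I * g ·))
    ha hb
  simp only [deriv_const_mul_field] at hIBP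
  simp only [inner_neg_right, intervalIntegral.integral_neg, hIBP, neg_neg]
  rw [← intervalIntegral.integral_neg]
  congr! 2 with y
  rw [← inner_I_mul_left, real_inner_comm]

lemma shearCross_eq : shearCross a b f = ∫ y in a..b, ⟪f y, -(I * deriv f y)⟫ := by
  simp only [inner_neg_right, ← inner_I_mul_left]
  exact integral_inner_comm _ _

lemma integral_mul_inner_deriv (hf : ContDiff ℝ 1 f) (ha : f a = 0) (hb : f b = 0) :
    ∫ y in a..b, y * ⟪f y, deriv f y⟫ = -(energy a b f / 2) := by
  have hderiv (y : ℝ) : deriv (fun y => y • f y) y = y • deriv f y + f y := by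
    simpa using ((hasDerivAt_id' y).fun_smul (hf.differentiable_one y).hasDerivAt).deriv
  have hinner : Continuous fun y => y * ⟪f y, deriv f y⟫ :=
    continuous_id.mul (hf.continuous.inner hf.continuous_deriv_one)
  have hyf : ContDiff ℝ 1 fun y => y • f y := contDiff_id.smul hf
  have hIBP := integral_inner_deriv_eq_neg hf hyf ha hb
  rw [integral_inner_comm (deriv f)] at hIBP
  simp only [hderiv, inner_add_right, real_inner_smul_left, real_inner_smul_right] at hIBP
  rw [intervalIntegral.integral_add (hinner.intervalIntegrable _ _)
    ((hf.continuous.inner hf.continuous).intervalIntegrable _ _), integral_inner_self] at hIBP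
  linarith

lemma integral_mul_inner_I_mul_neg_deriv_deriv (hf : ContDiff ℝ 2 f) (ha : f a = 0)
    (hb : f b = 0) :
    ∫ y in a..b, y * ⟪I * f y, -deriv (deriv f) y⟫ = shearCross a b f := by
  have hf₁ : ContDiff ℝ 1 f := hf.of_le one_le_two
  have hderiv (y : ℝ) : deriv (fun y => y • (I * f y)) y = y • (I * deriv f y) + I * f y := by
    simpa using ((hasDerivAt_id' y).fun_smul
      ((hf₁.differentiable_one y).hasDerivAt.const_mul I)).deriv
  have hyf : ContDiff ℝ 1 fun y => y • (I * f y) := contDiff_id.smul (contDiff_const.mul hf₁)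
  have hIBP := integral_inner_neg_deriv_deriv hyf hf (a := a) (b := b) (by simp [ha])
    (by simp [hb])
  rw [shearCross, integral_inner_comm]
  simp only [hderiv, inner_add_left, real_inner_smul_left, inner_I_mul_self, mul_zero, zero_add]
    at hIBP
  exact hIBP

lemma integral_inner_couetteOperator (hf : ContDiff ℝ 2 f) (hg : Continuous g) :
    ∫ y in a..b, ⟪couetteOperator ν κ f y, g y⟫ =
      ν * (∫ y in a..b, ⟪deriv (deriv f) y, g y⟫) - ν * κ ^ 2 * (∫ y in a..b, ⟪f y, g y⟫) -
        κ * ∫ y in a..b, y * ⟪I * f y, g y⟫ := by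
  have hfc := hf.continuous
  have := (contDiff_one_deriv_of_contDiff_two hf).continuous_deriv_one
  simp only [inner_couetteOperator_left]
  rw [intervalIntegral.integral_sub (Continuous.intervalIntegrable (by fun_prop) _ _)
      (Continuous.intervalIntegrable (by fun_prop) _ _),
    intervalIntegral.integral_sub (Continuous.intervalIntegrable (by fun_prop) _ _)
      (Continuous.intervalIntegrable (by fun_prop) _ _),
    intervalIntegral.integral_const_mul, intervalIntegral.integral_const_mul,
    intervalIntegral.integral_const_mul]

lemma integral_inner_couetteOperator_self (hf : ContDiff ℝ 2 f) (ha : f a = 0) (hb : f b = 0) :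
    ∫ y in a..b, ⟪couetteOperator ν κ f y, f y⟫ =
      -ν * energy a b (deriv f) - ν * κ ^ 2 * energy a b f := by
  have hIBP := integral_inner_neg_deriv_deriv (hf.of_le one_le_two) hf ha hb
  simp only [inner_neg_right, intervalIntegral.integral_neg, integral_inner_comm f,
    integral_inner_self] at hIBP
  rw [integral_inner_couetteOperator hf hf.continuous, integral_inner_self]
  simp only [inner_I_mul_self, mul_zero, intervalIntegral.integral_zero]
  linear_combination -ν * hIBP

lemma integral_inner_couetteOperator_neg_deriv_deriv (hf : ContDiff ℝ 2 f) (ha : f a = 0)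
    (hb : f b = 0) :
    ∫ y in a..b, ⟪couetteOperator ν κ f y, -deriv (deriv f) y⟫ =
      -ν * energy a b (deriv (deriv f)) - ν * κ ^ 2 * energy a b (deriv f) -
        κ * shearCross a b f := by
  rw [integral_inner_couetteOperator hf
      (contDiff_one_deriv_of_contDiff_two hf).continuous_deriv_one.fun_neg,
    integral_inner_neg_deriv_deriv (hf.of_le one_le_two) hf ha hb, integral_inner_self,
    integral_mul_inner_I_mul_neg_deriv_deriv hf ha hb]
  simp only [inner_neg_right, intervalIntegral.integral_neg, integral_inner_self]
  ring

lemma integral_inner_couetteOperator_neg_I_mul_deriv (hf : ContDiff ℝ 2 f) (ha : f a = 0)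
    (hb : f b = 0) :
    ∫ y in a..b, ⟪couetteOperator ν κ f y, -(I * deriv f y)⟫ =
      -ν * shearCross a b (deriv f) - ν * κ ^ 2 * shearCross a b f - κ * energy a b f / 2 := by
  have hf₁ : ContDiff ℝ 1 f := hf.of_le one_le_two
  have := hf₁.continuous_deriv_one
  have hII (z w : ℂ) : ⟪I * z, -(I * w)⟫ = -⟪z, w⟫ := by
    rw [inner_I_mul_left, mul_neg, ← mul_assoc, Complex.I_mul_I, neg_one_mul, neg_neg]
  rw [integral_inner_couetteOperator hf (by fun_prop), ← shearCross_eq]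
  simp only [hII, inner_neg_right, mul_neg, intervalIntegral.integral_neg,
    integral_mul_inner_deriv hf₁ ha hb, shearCross]
  ring

/-- The hypocoercive functional at time lag `τ`. The powers of `τ` and the constant `1 / 3` are
those for which its derivative along the flow has a sign. -/
noncomputable def hypocoerciveEnergy (ν κ a b τ : ℝ) (f : ℝ → ℂ) : ℝ :=
  energy a b f + ν * τ * energy a b (deriv f) + ν * κ * τ ^ 2 * shearCross a b f +
    ν * κ ^ 2 * τ ^ 3 / 3 * energy a b f

lemma mul_energy_le_hypocoerciveEnergy {τ : ℝ} (hν : 0 ≤ ν) (hab : a ≤ b) (hτ : 0 ≤ τ)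
    (hf : ContDiff ℝ 1 f) :
    (1 + ν * κ ^ 2 * τ ^ 3 / 12) * energy a b f ≤ hypocoerciveEnergy ν κ a b τ f := by
  have hpos := mul_nonneg (mul_nonneg hν hτ)
    (energy_deriv_add_shearCross_nonneg hf hab (κ * τ))
  rw [hypocoerciveEnergy]
  linarith

end Energy

namespace IsCouetteSolution

open Complex (I)

variable {ν κ a b t : ℝ} {ω : ℝ → ℝ → ℂ}

lemma continuous_energy (h : IsCouetteSolution ν κ a b ω) :
    Continuous fun t => energy a b (ω t) :=
  intervalIntegral.continuous_parametric_intervalIntegral_of_continuous'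
    (h.continuous.norm.pow 2) a b

lemma hasDerivAt_energy (h : IsCouetteSolution ν κ a b ω) (hν : 0 ≤ ν) (hab : a ≤ b)
    (ht : 0 < t) :
    HasDerivAt (fun s => energy a b (ω s))
      (2 * (-ν * energy a b (deriv (ω t)) - ν * κ ^ 2 * energy a b (ω t))) t := by
  obtain ⟨M, hM⟩ := h.exists_norm_le hν
  rw [← integral_inner_couetteOperator_self (h.contDiff_space t) (h.left_eq_zero t ht.le)
    (h.right_eq_zero t ht.le)]
  simp only [← integral_inner_self]
  exact h.hasDerivAt_integral_inner hν hab ht (fun s => (h.contDiff_space s).continuous)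
    (fun s _ => integral_inner_comm _ _)
    (fun s hs => hM s (by linarith)) (fun y _ => (h.contDiff_time y).continuous.tendsto t)

lemma hasDerivAt_energy_deriv (h : IsCouetteSolution ν κ a b ω) (hν : 0 < ν) (hab : a ≤ b)
    (ht : 0 < t) :
    HasDerivAt (fun s => energy a b (deriv (ω s)))
      (2 * (-ν * energy a b (deriv (deriv (ω t))) - ν * κ ^ 2 * energy a b (deriv (ω t)) -
        κ * shearCross a b (ω t))) t := by
  obtain ⟨Z, hZ⟩ := h.exists_norm_deriv_deriv_le hν (half_pos ht)
  have hIBP (s : ℝ) (hs : 0 ≤ s) (r : ℝ) := integral_inner_neg_deriv_deriv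
    ((h.contDiff_space s).of_le one_le_two) (h.contDiff_space r) (h.left_eq_zero s hs)
    (h.right_eq_zero s hs)
  have heq : (fun s => energy a b (deriv (ω s))) =ᶠ[𝓝 t]
      fun s => ∫ y in a..b, ⟪ω s y, -deriv (deriv (ω s)) y⟫ := by
    filter_upwards [Ioi_mem_nhds ht] with s hs
    rw [hIBP s (mem_Ioi.1 hs).le, integral_inner_self]
  rw [← integral_inner_couetteOperator_neg_deriv_deriv (h.contDiff_space t)
    (h.left_eq_zero t ht.le) (h.right_eq_zero t ht.le)]
  refine (h.hasDerivAt_integral_inner hν.le hab ht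
    (fun s => (h.contDiff_deriv_space s).continuous_deriv_one.fun_neg)
    (fun s hs => ?_) (fun s hs y hy => (norm_neg _).trans_le (hZ s hs y hy))
    (fun y hy => (h.tendsto_deriv_deriv hν.ne' ht hy).neg)).congr_of_eventuallyEq heq
  rw [hIBP s hs, hIBP t ht.le, integral_inner_comm]

lemma hasDerivAt_shearCross (h : IsCouetteSolution ν κ a b ω) (hν : 0 < ν) (hab : a < b)
    (ht : 0 < t) :
    HasDerivAt (fun s => shearCross a b (ω s))
      (2 * (-ν * shearCross a b (deriv (ω t)) - ν * κ ^ 2 * shearCross a b (ω t) -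
        κ * energy a b (ω t) / 2)) t := by
  obtain ⟨Z, hZ⟩ := h.exists_norm_deriv_le hν hab (half_pos ht)
  rw [← integral_inner_couetteOperator_neg_I_mul_deriv (h.contDiff_space t)
    (h.left_eq_zero t ht.le) (h.right_eq_zero t ht.le)]
  simp only [shearCross_eq]
  exact h.hasDerivAt_integral_inner hν.le hab.le ht
    (fun s => (continuous_const.mul (h.contDiff_deriv_space s).continuous).neg)
    (fun s hs => integral_inner_neg_I_mul_deriv ((h.contDiff_space s).of_le one_le_two)
      ((h.contDiff_space t).of_le one_le_two) (h.left_eq_zero s hs) (h.right_eq_zero s hs))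
    (fun s hs y hy => by simpa using hZ s hs y hy)
    (fun y hy => ((h.tendsto_deriv hν hab ht hy).const_mul I).neg)

lemma hasDerivAt_hypocoerciveEnergy (h : IsCouetteSolution ν κ a b ω) (hν : 0 < ν) (hab : a < b)
    (s : ℝ) (ht : 0 < t) :
    HasDerivAt (fun x => hypocoerciveEnergy ν κ a b (x - s) (ω x))
      (-2 * ν * κ ^ 2 * hypocoerciveEnergy ν κ a b (t - s) (ω t) - ν * energy a b (deriv (ω t)) -
        2 * ν ^ 2 * (t - s) * (energy a b (deriv (deriv (ω t))) +
          κ * (t - s) * shearCross a b (deriv (ω t)) +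
          (κ * (t - s)) ^ 2 / 3 * energy a b (deriv (ω t)))) t := by
  have hE := h.hasDerivAt_energy hν.le hab.le ht
  have hD := h.hasDerivAt_energy_deriv hν hab.le ht
  have hB := h.hasDerivAt_shearCross hν hab ht
  have hτ : HasDerivAt (fun x => x - s) 1 t := (hasDerivAt_id t).sub_const s
  refine (((hE.add ((hτ.const_mul ν).mul hD)).add (((hτ.fun_pow 2).const_mul (ν * κ)).mul hB)).add
    ((((hτ.fun_pow 3).const_mul (ν * κ ^ 2)).div_const 3).mul hE)).congr_deriv ?_
  rw [hypocoerciveEnergy]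
  push_cast
  ring

lemma antitoneOn_hypocoerciveEnergy (h : IsCouetteSolution ν κ a b ω) (hν : 0 < ν) (hab : a < b)
    {s : ℝ} (hs : 0 < s) :
    AntitoneOn (fun x => hypocoerciveEnergy ν κ a b (x - s) (ω x)) (Ici s) := by
  refine antitoneOn_of_hasDerivWithinAt_nonpos (convex_Ici s)
    (fun x hx => (h.hasDerivAt_hypocoerciveEnergy hν hab s
      (hs.trans_le hx)).continuousAt.continuousWithinAt)
    (fun x hx => (h.hasDerivAt_hypocoerciveEnergy hν hab s
      (hs.trans_le (interior_subset hx))).hasDerivWithinAt) fun x hx => ?_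
  have hτ : 0 ≤ x - s := sub_nonneg.2 (interior_subset hx)
  have hΦ : 0 ≤ hypocoerciveEnergy ν κ a b (x - s) (ω x) :=
    (mul_nonneg (by positivity) (energy_nonneg hab.le)).trans
      (mul_energy_le_hypocoerciveEnergy hν.le hab.le hτ ((h.contDiff_space x).of_le one_le_two))
  have hD : 0 ≤ energy a b (deriv (ω x)) := energy_nonneg hab.le
  have hcross := energy_deriv_add_shearCross_nonneg (h.contDiff_deriv_space x) hab.le
    (κ * (x - s))
  have hdissip : 0 ≤ energy a b (deriv (deriv (ω x))) +
      κ * (x - s) * shearCross a b (deriv (ω x)) +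
      (κ * (x - s)) ^ 2 / 3 * energy a b (deriv (ω x)) := by
    linarith [mul_nonneg (sq_nonneg (κ * (x - s))) hD]
  have hterm₀ : 0 ≤ 2 * ν * κ ^ 2 * hypocoerciveEnergy ν κ a b (x - s) (ω x) := by positivity
  have hterm₁ : 0 ≤ ν * energy a b (deriv (ω x)) := by positivity
  have hterm₂ := mul_nonneg (by positivity : 0 ≤ 2 * ν ^ 2 * (x - s)) hdissip
  linarith

lemma mul_energy_add_le (h : IsCouetteSolution ν κ a b ω) (hν : 0 < ν) (hab : a < b) {s τ : ℝ}
    (hs : 0 ≤ s) (hτ : 0 ≤ τ) :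
    (1 + ν * κ ^ 2 * τ ^ 3 / 12) * energy a b (ω (s + τ)) ≤ energy a b (ω s) := by
  have hclosed : IsClosed {s |
      (1 + ν * κ ^ 2 * τ ^ 3 / 12) * energy a b (ω (s + τ)) ≤ energy a b (ω s)} :=
    isClosed_le (continuous_const.mul (h.continuous_energy.comp (continuous_add_const τ)))
      h.continuous_energy
  refine closure_minimal (fun s (hs : 0 < s) => ?_) hclosed (closure_Ioi (0 : ℝ) ▸ hs)
  calc (1 + ν * κ ^ 2 * τ ^ 3 / 12) * energy a b (ω (s + τ))
      ≤ hypocoerciveEnergy ν κ a b τ (ω (s + τ)) :=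
        mul_energy_le_hypocoerciveEnergy hν.le hab.le hτ
          ((h.contDiff_space _).of_le one_le_two)
    _ ≤ energy a b (ω s) := by
        simpa [hypocoerciveEnergy] using h.antitoneOn_hypocoerciveEnergy hν hab hs
          self_mem_Ici (show s + τ ∈ Ici s by simpa using hτ) (by simpa using hτ)

end IsCouetteSolution

lemma nL2_eq_sqrt_energy (f : ℝ → ℂ) : nL2 f = √(energy (-1) 1 f) := by
  rw [nL2, energy, ← Real.sqrt_eq_rpow, intervalIntegral.integral_of_le (by norm_num),
    integral_Icc_eq_integral_Ioc]

lemma nL2_sq (f : ℝ → ℂ) : nL2 f ^ 2 = energy (-1) 1 f := by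
  rw [nL2_eq_sqrt_energy, Real.sq_sqrt (energy_nonneg (by norm_num))]

namespace IsCouetteSolution

variable {ν κ a b μ t : ℝ} {ω : ℝ → ℝ → ℂ}

lemma energy_le_exp_mul_of_lt_pi (h : IsCouetteSolution ν κ a b ω) (hν : 0 ≤ ν) (hab : a ≤ b)
    {c : ℝ} (hc : 0 ≤ c) (hcπ : c * (b - a) < Real.pi) (ht : 0 ≤ t) :
    energy a b (ω t) ≤ Real.exp (-(2 * ν * c ^ 2) * t) * energy a b (ω 0) := by
  refine le_exp_mul_of_deriv_le h.continuous_energy.continuousOn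
    (fun x hx => h.hasDerivAt_energy hν hab hx) (fun x hx => ?_) ht
  have hpoincare : c ^ 2 * energy a b (ω x) ≤ energy a b (deriv (ω x)) :=
    sq_mul_integral_norm_sq_le_integral_norm_deriv_sq ((h.contDiff_space x).of_le one_le_two) hab
      (h.left_eq_zero x hx.le) (h.right_eq_zero x hx.le) hc hcπ
  have hzero : 0 ≤ ν * κ ^ 2 * energy a b (ω x) :=
    mul_nonneg (by positivity) (energy_nonneg hab)
  linarith [mul_le_mul_of_nonneg_left hpoincare hν]

lemma antitoneOn_energy (h : IsCouetteSolution ν κ a b ω) (hν : 0 < ν) (hab : a < b) :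
    AntitoneOn (fun t => energy a b (ω t)) (Ici 0) := by
  intro s hs t _ hst
  have hτ : 0 ≤ t - s := sub_nonneg.2 hst
  have hgain := h.mul_energy_add_le hν hab hs hτ
  rw [add_sub_cancel, add_mul, one_mul] at hgain
  exact (le_add_of_nonneg_right (mul_nonneg (by positivity) (energy_nonneg hab.le))).trans hgain

-- The time lag `3 / μ` gains the factor `1 + 27 / 12`, which exceeds `e`.
lemma energy_le_exp_one_sub_mul (h : IsCouetteSolution ν κ a b ω) (hν : 0 < ν) (hab : a < b)
    (hμ : 0 ≤ μ) (hμκ : μ ^ 3 = ν * κ ^ 2) (ht : 0 ≤ t) :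
    energy a b (ω t) ≤ Real.exp (1 - μ * t / 3) * energy a b (ω 0) := by
  have hanti := h.antitoneOn_energy hν hab
  obtain rfl | hμ := hμ.eq_or_lt
  · calc energy a b (ω t) ≤ energy a b (ω 0) := hanti self_mem_Ici ht ht
      _ ≤ Real.exp (1 - 0 * t / 3) * energy a b (ω 0) :=
        le_mul_of_one_le_left (energy_nonneg hab.le) (Real.one_le_exp (by simp))
  have hcontr (s : ℝ) (hs : s ≥ 0) :
      energy a b (ω (s + 3 / μ)) ≤ Real.exp (-1) * energy a b (ω s) := by
    have hgain : 1 + ν * κ ^ 2 * (3 / μ) ^ 3 / 12 = 13 / 4 := by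
      rw [← hμκ]; field_simp; norm_num
    have hstep := h.mul_energy_add_le hν hab hs (by positivity : 0 ≤ 3 / μ)
    rw [hgain] at hstep
    rw [Real.exp_neg, le_inv_mul_iff₀ (Real.exp_pos 1)]
    refine le_trans ?_ hstep
    gcongr
    · exact energy_nonneg hab.le
    · linarith [Real.exp_one_lt_d9]
  have := le_exp_one_sub_div_mul_of_contraction (by positivity : 0 < 3 / μ) hanti
    (energy_nonneg hab.le) hcontr ht
  rwa [div_div_eq_mul_div, mul_comm t] at this

lemma mul_integral_energy_le (h : IsCouetteSolution ν κ a b ω) (hν : 0 < ν) (hab : a < b)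
    (hμ : 0 ≤ μ) (hμκ : μ ^ 3 = ν * κ ^ 2) :
    μ * ∫ t in Ioi 0, energy a b (ω t) ≤ 9 * energy a b (ω 0) := by
  have hE₀ : 0 ≤ energy a b (ω 0) := energy_nonneg hab.le
  obtain rfl | hμ := hμ.eq_or_lt
  · rw [zero_mul]
    positivity
  have hrate : -(μ / 3) < 0 := by linarith
  have hmono : ∫ t in Ioi 0, energy a b (ω t) ≤
      ∫ t in Ioi 0, Real.exp 1 * energy a b (ω 0) * Real.exp (-(μ / 3) * t) := by
    refine integral_mono_of_nonneg (.of_forall fun t => energy_nonneg hab.le)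
      ((integrableOn_exp_mul_Ioi hrate 0).const_mul _) ?_
    filter_upwards [ae_restrict_mem measurableSet_Ioi] with t ht
    refine (h.energy_le_exp_one_sub_mul hν hab hμ.le hμκ (le_of_lt ht)).trans_eq ?_
    rw [sub_eq_add_neg, Real.exp_add]
    ring_nf
  rw [integral_const_mul, integral_exp_mul_Ioi hrate, mul_zero, Real.exp_zero] at hmono
  calc μ * ∫ t in Ioi 0, energy a b (ω t)
      ≤ μ * (Real.exp 1 * energy a b (ω 0) * (-1 / -(μ / 3))) := by gcongr
    _ = 3 * Real.exp 1 * energy a b (ω 0) := by field_simp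
    _ ≤ 9 * energy a b (ω 0) := by
        gcongr
        linarith [Real.exp_one_lt_d9]

-- The geometric mean of the enhanced-dissipation bound and the Poincaré bound with `c = 3 / 2`.
lemma nL2_le_exp_mul (h : IsCouetteSolution ν κ (-1) 1 ω) (hν : 0 < ν) (hμ : 0 ≤ μ)
    (hμκ : μ ^ 3 = ν * κ ^ 2) (ht : 0 ≤ t) :
    nL2 (ω t) ≤ 9 * Real.exp (-(μ / 12 + ν) * t) * nL2 (ω 0) := by
  have hE₀ : 0 ≤ energy (-1) 1 (ω 0) := energy_nonneg (by norm_num)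
  have henhanced := h.energy_le_exp_one_sub_mul hν (by norm_num) hμ hμκ ht
  have hpoincare := h.energy_le_exp_mul_of_lt_pi hν.le (by norm_num) (c := 3 / 2) (by norm_num)
    (by linarith [Real.pi_gt_three]) ht
  have hmean : energy (-1) 1 (ω t) ≤
      Real.exp (((1 - μ * t / 3) + -(2 * ν * (3 / 2) ^ 2) * t) / 2) * energy (-1) 1 (ω 0) := by
    rcases le_total (1 - μ * t / 3) (-(2 * ν * (3 / 2) ^ 2) * t) with hle | hle
    · exact henhanced.trans (by gcongr; linarith)
    · exact hpoincare.trans (by gcongr; linarith)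
  have hbound : energy (-1) 1 (ω t) ≤
      (9 * Real.exp (-(μ / 12 + ν) * t)) ^ 2 * energy (-1) 1 (ω 0) := by
    refine hmean.trans (mul_le_mul_of_nonneg_right ?_ hE₀)
    calc Real.exp (((1 - μ * t / 3) + -(2 * ν * (3 / 2) ^ 2) * t) / 2)
        ≤ Real.exp (1 + (2 : ℕ) * (-(μ / 12 + ν) * t)) := by
          gcongr
          push_cast
          linarith [mul_nonneg hν.le ht]
      _ = Real.exp 1 * Real.exp (-(μ / 12 + ν) * t) ^ 2 := by
          rw [Real.exp_add, Real.exp_nat_mul]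
      _ ≤ (9 * Real.exp (-(μ / 12 + ν) * t)) ^ 2 := by
          rw [mul_pow]
          gcongr
          linarith [Real.exp_one_lt_d9]
  rw [nL2_eq_sqrt_energy, nL2_eq_sqrt_energy, ← Real.sqrt_sq (by positivity :
    0 ≤ 9 * Real.exp (-(μ / 12 + ν) * t)), ← Real.sqrt_mul (sq_nonneg _)]
  exact Real.sqrt_le_sqrt hbound

end IsCouetteSolution

theorem statement11_general {ν κ : ℝ} {ω : ℝ → ℝ → ℂ} (hν : 0 < ν)
    (h : IsCouetteSolution ν κ (-1) 1 ω) :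
    (∀ t ≥ 0, nL2 (ω t) ≤
        9 * Real.exp (-(1 / 12 * ν ^ ((1 : ℝ) / 3) * |κ| ^ ((2 : ℝ) / 3) + ν) * t) *
          nL2 (ω 0)) ∧
      (ν * κ ^ 2) ^ ((1 : ℝ) / 3) * ∫ t in Ioi 0, nL2 (ω t) ^ 2 ≤ 9 * nL2 (ω 0) ^ 2 := by
  set μ : ℝ := (ν * κ ^ 2) ^ ((1 : ℝ) / 3) with hμ
  have hμ₀ : 0 ≤ μ := by positivity
  have hμ_cube : μ ^ 3 = ν * κ ^ 2 := by
    rw [hμ, ← Real.rpow_natCast, ← Real.rpow_mul (by positivity)]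
    norm_num
  have hμ_split : ν ^ ((1 : ℝ) / 3) * |κ| ^ ((2 : ℝ) / 3) = μ := by
    rw [hμ, Real.mul_rpow hν.le (by positivity), ← sq_abs, ← Real.rpow_natCast,
      ← Real.rpow_mul (abs_nonneg _)]
    norm_num
  refine ⟨fun t ht => ?_, ?_⟩
  · rw [mul_assoc (1 / 12), hμ_split, one_div_mul_eq_div]
    exact h.nL2_le_exp_mul hν hμ₀ hμ_cube ht
  · simp only [nL2_sq]
    exact h.mul_integral_energy_le hν (by norm_num) hμ₀ hμ_cube

/-- Enhanced-dissipation semigroup bound for the linearized Navier–Stokes operator around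
Couette flow with Navier-slip (zero Dirichlet vorticity) boundary conditions. -/
theorem statement11 :
    ∃ C c : ℝ, 0 < C ∧ 0 < c ∧
      ∀ (ν : ℝ) (k : ℤ) (ω : ℝ → ℝ → ℂ),
        0 < ν → ν ≤ 1 →
        Continuous (fun p : ℝ × ℝ => ω p.1 p.2) →
        (∀ y : ℝ, ContDiff ℝ 1 (fun t => ω t y)) →
        (∀ t : ℝ, ContDiff ℝ 2 (fun y => ω t y)) →
        (∀ t > (0:ℝ), ∀ y ∈ Set.Icc (-1:ℝ) 1,
          deriv (fun s => ω s y) t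
            = (ν : ℂ) * (deriv (deriv (ω t)) y - (k:ℂ)^2 * ω t y)
              - Complex.I * (k:ℂ) * (y:ℂ) * ω t y) →
        (∀ t ≥ (0:ℝ), ω t (-1) = 0 ∧ ω t 1 = 0) →
        (∀ t ≥ (0:ℝ),
          nL2 (ω t) ≤ C * Real.exp (-(c * ν ^ ((1:ℝ)/3) * |(k:ℝ)| ^ ((2:ℝ)/3) + ν) * t)
            * nL2 (ω 0))
        ∧ (1 ≤ |k| →
            (ν * (k:ℝ)^2) ^ ((1:ℝ)/3) * ∫ t in Set.Ioi (0:ℝ), (nL2 (ω t))^2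
              ≤ C * (nL2 (ω 0))^2) := by
  refine ⟨9, 1 / 12, by norm_num, by norm_num,
    fun ν k ω hν _ hcont htime hspace hpde hbc => ?_⟩
  have h : IsCouetteSolution ν k (-1) 1 ω :=
    ⟨hcont, htime, hspace, by simpa [couetteOperator] using hpde, fun t ht => (hbc t ht).1,
      fun t ht => (hbc t ht).2⟩
  exact (statement11_general hν h).imp_right fun hint _ => hint
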